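/- Let T>0, let ρ₀:ℝ²→ℝ be continuous, and for j∈{+,−} let u₀^j,v₀^j:ℝ²→ℝ be C¹ and a_j,b_j:[0,T]×ℝ→ℝ be C¹. Suppose there are functions x,y:[0,T]×ℝ→ℝ with x(t,l) = a_j(t,l) + t·u₀^j(a_j,b_j) and y(t,l) = b_j(t,l) + t·v₀^j(a_j,b_j) for both j=+,−. Define D_j(t,l):=(1+t·∂₁u₀^j(a_j,b_j))(1+t·∂₂v₀^j(a_j,b_j)) − t²·∂₂u₀^j(a_j,b_j)·∂₁v₀^j(a_j,b_j) and assume D_j≠0; set ρ_j:=ρ₀(a_j,b_j)/D_j, u_j:=u₀^j(a_j,b_j), v_j:=v₀^j(a_j,b_j), ω_j:=∂_ta_j·∂_lb_j − ∂_tb_j·∂_la_j. Define P̃(t,l)=∫₀ᵗ(ρ₀(a₊,b₊)ω₊ − ρ₀(a₋,b₋)ω₋)dτ, Ĩ(t,l)=∫₀ᵗ(ρ₀(a₊,b₊)u₊ω₊ − ρ₀(a₋,b₋)u₋ω₋)dτ, J̃(t,l)=∫₀ᵗ(ρ₀(a₊,b₊)v₊ω₊ − ρ₀(a₋,b₋)v₋ω₋)dτ,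 and assume P̃(t,l)>0, ∂_tx = U := Ĩ/P̃ and ∂_ty = V := J̃/P̃ for t∈(0,T]. Then for all t∈(0,T], l∈ℝ: (1) ∂_tP̃ + ∂_lx·[V(ρ₊−ρ₋) − (ρ₊v₊−ρ₋v₋)] + ∂_ly·[(ρ₊u₊−ρ₋u₋) − U(ρ₊−ρ₋)] = 0; (2) ∂_tĨ + ∂_lx·[V(ρ₊u₊−ρ₋u₋) − (ρ₊u₊v₊−ρ₋u₋v₋)] + ∂_ly·[(ρ₊u₊²−ρ₋u₋²) − U(ρ₊u₊−ρ₋u₋)] = 0; (3) ∂_tJ̃ + ∂_lx·[V(ρ₊v₊−ρ₋v₋) − (ρ₊v₊²−ρ₋v₋²)] + ∂_ly·[(ρ₊u₊v₊−ρ₋u₋v₋) − U(ρ₊v₊−ρ₋v₋)] = 0. -/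

import Mathlib

theorem aux_fst {f : ℝ → ℝ → ℝ} (hf : ContDiff ℝ 1 fun p : ℝ × ℝ => f p.1 p.2) (p q : ℝ) :
    HasDerivAt (fun s => f s q) (fderiv ℝ (fun p : ℝ × ℝ => f p.1 p.2) (p, q) (1, 0)) p := by
  have h1 := (hf.differentiable one_ne_zero (p, q)).hasFDerivAt
  have h2 : HasDerivAt (fun s : ℝ => (s, q)) ((1 : ℝ), (0 : ℝ)) p :=
    (hasDerivAt_id p).prodMk (hasDerivAt_const p q)
  exact h1.comp_hasDerivAt p h2

theorem aux_snd {f : ℝ → ℝ → ℝ} (hf : ContDiff ℝ 1 fun p : ℝ × ℝ => f p.1 p.2) (p q : ℝ) :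
    HasDerivAt (fun m => f p m) (fderiv ℝ (fun p : ℝ × ℝ => f p.1 p.2) (p, q) (0, 1)) q := by
  have h1 := (hf.differentiable one_ne_zero (p, q)).hasFDerivAt
  have h2 : HasDerivAt (fun s : ℝ => (p, s)) ((0 : ℝ), (1 : ℝ)) q :=
    (hasDerivAt_const q p).prodMk (hasDerivAt_id q)
  exact h1.comp_hasDerivAt q h2

theorem aux_chain {f : ℝ → ℝ → ℝ} (hf : ContDiff ℝ 1 fun p : ℝ × ℝ => f p.1 p.2)
    {g h : ℝ → ℝ} {g' h' t : ℝ} (hg : HasDerivAt g g' t) (hh : HasDerivAt h h' t) :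
    HasDerivAt (fun s => f (g s) (h s))
      (deriv (fun s => f s (h t)) (g t) * g' + deriv (fun m => f (g t) m) (h t) * h') t := by
  have h1 := (hf.differentiable one_ne_zero (g t, h t)).hasFDerivAt
  have h2 := h1.comp_hasDerivAt t (hg.prodMk hh)
  rw [(aux_fst hf _ _).deriv, (aux_snd hf _ _).deriv]
  refine h2.congr_deriv ?_
  have : (g', h') = g' • ((1 : ℝ), (0 : ℝ)) + h' • ((0 : ℝ), (1 : ℝ)) := by simp
  rw [this, map_add, map_smul, map_smul]
  simp [mul_comm]

theorem aux_cont_fst {f : ℝ → ℝ → ℝ} (hf : ContDiff ℝ 1 fun p : ℝ × ℝ => f p.1 p.2) (l : ℝ) :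
    Continuous fun t => deriv (fun s => f s l) t := by
  have h := hf.continuous_fderiv one_ne_zero
  simp_rw [fun t => (aux_fst hf t l).deriv]
  have h2 : Continuous fun t : ℝ => fderiv ℝ (fun p : ℝ × ℝ => f p.1 p.2) (t, l) :=
    h.comp (by fun_prop)
  exact h2.clm_apply continuous_const

theorem aux_cont_snd {f : ℝ → ℝ → ℝ} (hf : ContDiff ℝ 1 fun p : ℝ × ℝ => f p.1 p.2) (l : ℝ) :
    Continuous fun t => deriv (fun m => f t m) l := by
  have h := hf.continuous_fderiv one_ne_zero
  simp_rw [fun t => (aux_snd hf t l).deriv]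
  have h2 : Continuous fun t : ℝ => fderiv ℝ (fun p : ℝ × ℝ => f p.1 p.2) (t, l) :=
    h.comp (by fun_prop)
  exact h2.clm_apply continuous_const

theorem aux_slice {f : ℝ → ℝ → ℝ} (hf : Continuous fun p : ℝ × ℝ => f p.1 p.2)
    {g h : ℝ → ℝ} (hg : Continuous g) (hh : Continuous h) :
    Continuous fun t => f (g t) (h t) :=
  hf.comp (hg.prodMk hh)

theorem aux_t {T : ℝ} {w z c : ℝ → ℝ} {t W Z C : ℝ} (ht : t ∈ Set.Ioc (0:ℝ) T)
    (hw : ∀ s ∈ Set.Icc (0:ℝ) T, w s = c s + s * z s)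
    (hW : HasDerivAt w W t) (hc : HasDerivAt c C t) (hz : HasDerivAt z Z t) :
    W = C + (z t + t * Z) := by
  have h1 : HasDerivAt (fun s => c s + s * z s) (C + (1 * z t + t * Z)) t :=
    hc.add ((hasDerivAt_id t).mul hz)
  have hu : UniqueDiffWithinAt ℝ (Set.Icc (0:ℝ) T) t :=
    uniqueDiffOn_Icc (ht.1.trans_le ht.2) t ⟨ht.1.le, ht.2⟩
  have h2 := (h1.hasDerivWithinAt (s := Set.Icc (0:ℝ) T)).congr hw (hw t ⟨ht.1.le, ht.2⟩)
  have := hu.eq_deriv _ hW.hasDerivWithinAt h2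
  simpa using this

theorem aux_key {T : ℝ} {u v a b x y : ℝ → ℝ → ℝ}
    (hu : ContDiff ℝ 1 fun p : ℝ × ℝ => u p.1 p.2)
    (hv : ContDiff ℝ 1 fun p : ℝ × ℝ => v p.1 p.2)
    (ha : ContDiff ℝ 1 fun p : ℝ × ℝ => a p.1 p.2)
    (hb : ContDiff ℝ 1 fun p : ℝ × ℝ => b p.1 p.2)
    (hx : ∀ t ∈ Set.Icc (0:ℝ) T, ∀ l : ℝ, x t l = a t l + t * u (a t l) (b t l))
    (hy : ∀ t ∈ Set.Icc (0:ℝ) T, ∀ l : ℝ, y t l = b t l + t * v (a t l) (b t l))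
    {t l U V : ℝ} (ht : t ∈ Set.Ioc (0:ℝ) T)
    (hU : HasDerivAt (fun s => x s l) U t) (hV : HasDerivAt (fun s => y s l) V t) :
    ((1 + t * deriv (fun s => u s (b t l)) (a t l)) *
        (1 + t * deriv (fun m => v (a t l) m) (b t l)) -
      t ^ 2 * deriv (fun m => u (a t l) m) (b t l) *
        deriv (fun s => v s (b t l)) (a t l)) *
      (deriv (fun s => a s l) t * deriv (fun m => b t m) l -
        deriv (fun s => b s l) t * deriv (fun m => a t m) l) =
    (U - u (a t l) (b t l)) * deriv (fun m => y t m) l -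
      (V - v (a t l) (b t l)) * deriv (fun m => x t m) l := by
  have ht' : t ∈ Set.Icc (0:ℝ) T := ⟨ht.1.le, ht.2⟩
  have at' := (aux_fst ha t l).differentiableAt.hasDerivAt
  have bt' := (aux_fst hb t l).differentiableAt.hasDerivAt
  have al' := (aux_snd ha t l).differentiableAt.hasDerivAt
  have bl' := (aux_snd hb t l).differentiableAt.hasDerivAt
  have e1 := aux_t ht (fun s hs => hx s hs l) hU at' (aux_chain hu at' bt')
  have e2 := aux_t ht (fun s hs => hy s hs l) hV bt' (aux_chain hv at' bt')
  have e3 := (al'.add ((aux_chain hu al' bl').const_mul t)).deriv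
  have e3f : (fun m => x t m) = (fun m => a t m) + fun m => t * u (a t m) (b t m) :=
    funext (hx t ht')
  rw [← e3f] at e3
  have e4 := (bl'.add ((aux_chain hv al' bl').const_mul t)).deriv
  have e4f : (fun m => y t m) = (fun m => b t m) + fun m => t * v (a t m) (b t m) :=
    funext (hy t ht')
  rw [← e4f] at e4
  rw [e1, e2, e3, e4]
  ring

theorem aux_int {f g : ℝ → ℝ} (hf : Continuous f) (hg : ∀ t, g t = ∫ τ in (0:ℝ)..t, f τ) (t : ℝ) :
    deriv g t = f t := by
  rw [funext hg]
  exact hf.deriv_integral f 0 t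

/-- Theorem 4.1 of the paper: the 1-D system (27) governing the evolution of the
mass `P̃` and momenta `Ĩ, J̃` inside the shock of the 2-D pressureless gas. -/
theorem stmt_6
    (T : ℝ) (hT : 0 < T)
    (ρ₀ : ℝ → ℝ → ℝ) (hρ₀ : Continuous fun p : ℝ × ℝ => ρ₀ p.1 p.2)
    (u0P v0P u0M v0M : ℝ → ℝ → ℝ)
    (hu0P : ContDiff ℝ 1 fun p : ℝ × ℝ => u0P p.1 p.2)
    (hv0P : ContDiff ℝ 1 fun p : ℝ × ℝ => v0P p.1 p.2)
    (hu0M : ContDiff ℝ 1 fun p : ℝ × ℝ => u0M p.1 p.2)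
    (hv0M : ContDiff ℝ 1 fun p : ℝ × ℝ => v0M p.1 p.2)
    (aP bP aM bM : ℝ → ℝ → ℝ)
    (haP : ContDiff ℝ 1 fun p : ℝ × ℝ => aP p.1 p.2)
    (hbP : ContDiff ℝ 1 fun p : ℝ × ℝ => bP p.1 p.2)
    (haM : ContDiff ℝ 1 fun p : ℝ × ℝ => aM p.1 p.2)
    (hbM : ContDiff ℝ 1 fun p : ℝ × ℝ => bM p.1 p.2)
    (x y : ℝ → ℝ → ℝ)
    (hxP : ∀ t ∈ Set.Icc (0:ℝ) T, ∀ l : ℝ,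
      x t l = aP t l + t * u0P (aP t l) (bP t l))
    (hxM : ∀ t ∈ Set.Icc (0:ℝ) T, ∀ l : ℝ,
      x t l = aM t l + t * u0M (aM t l) (bM t l))
    (hyP : ∀ t ∈ Set.Icc (0:ℝ) T, ∀ l : ℝ,
      y t l = bP t l + t * v0P (aP t l) (bP t l))
    (hyM : ∀ t ∈ Set.Icc (0:ℝ) T, ∀ l : ℝ,
      y t l = bM t l + t * v0M (aM t l) (bM t l))
    (DP DM ρP ρM uP vP uM vM ωP ωM : ℝ → ℝ → ℝ)
    (hDP : ∀ t l, DP t l =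
      (1 + t * deriv (fun s => u0P s (bP t l)) (aP t l)) *
        (1 + t * deriv (fun m => v0P (aP t l) m) (bP t l)) -
      t ^ 2 * deriv (fun m => u0P (aP t l) m) (bP t l) *
        deriv (fun s => v0P s (bP t l)) (aP t l))
    (hDM : ∀ t l, DM t l =
      (1 + t * deriv (fun s => u0M s (bM t l)) (aM t l)) *
        (1 + t * deriv (fun m => v0M (aM t l) m) (bM t l)) -
      t ^ 2 * deriv (fun m => u0M (aM t l) m) (bM t l) *
        deriv (fun s => v0M s (bM t l)) (aM t l))
    (hDPne : ∀ t ∈ Set.Icc (0:ℝ) T, ∀ l : ℝ, DP t l ≠ 0)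
    (hDMne : ∀ t ∈ Set.Icc (0:ℝ) T, ∀ l : ℝ, DM t l ≠ 0)
    (hρP : ∀ t l, ρP t l = ρ₀ (aP t l) (bP t l) / DP t l)
    (hρM : ∀ t l, ρM t l = ρ₀ (aM t l) (bM t l) / DM t l)
    (huP : ∀ t l, uP t l = u0P (aP t l) (bP t l))
    (hvP : ∀ t l, vP t l = v0P (aP t l) (bP t l))
    (huM : ∀ t l, uM t l = u0M (aM t l) (bM t l))
    (hvM : ∀ t l, vM t l = v0M (aM t l) (bM t l))
    (hωP : ∀ t l, ωP t l =
      deriv (fun s => aP s l) t * deriv (fun m => bP t m) l -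
      deriv (fun s => bP s l) t * deriv (fun m => aP t m) l)
    (hωM : ∀ t l, ωM t l =
      deriv (fun s => aM s l) t * deriv (fun m => bM t m) l -
      deriv (fun s => bM s l) t * deriv (fun m => aM t m) l)
    (Pt It Jt U V : ℝ → ℝ → ℝ)
    (hPt : ∀ t l, Pt t l = ∫ τ in (0:ℝ)..t,
      (ρ₀ (aP τ l) (bP τ l) * ωP τ l - ρ₀ (aM τ l) (bM τ l) * ωM τ l))
    (hIt : ∀ t l, It t l = ∫ τ in (0:ℝ)..t,
      (ρ₀ (aP τ l) (bP τ l) * uP τ l * ωP τ l -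
       ρ₀ (aM τ l) (bM τ l) * uM τ l * ωM τ l))
    (hJt : ∀ t l, Jt t l = ∫ τ in (0:ℝ)..t,
      (ρ₀ (aP τ l) (bP τ l) * vP τ l * ωP τ l -
       ρ₀ (aM τ l) (bM τ l) * vM τ l * ωM τ l))
    (hPpos : ∀ t ∈ Set.Ioc (0:ℝ) T, ∀ l : ℝ, 0 < Pt t l)
    (hU : ∀ t l, U t l = It t l / Pt t l)
    (hV : ∀ t l, V t l = Jt t l / Pt t l)
    (hxt : ∀ t ∈ Set.Ioc (0:ℝ) T, ∀ l : ℝ,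
      HasDerivAt (fun s => x s l) (U t l) t)
    (hyt : ∀ t ∈ Set.Ioc (0:ℝ) T, ∀ l : ℝ,
      HasDerivAt (fun s => y s l) (V t l) t) :
    ∀ t ∈ Set.Ioc (0:ℝ) T, ∀ l : ℝ,
      deriv (fun s => Pt s l) t +
        deriv (fun m => x t m) l *
          (V t l * (ρP t l - ρM t l) - (ρP t l * vP t l - ρM t l * vM t l)) +
        deriv (fun m => y t m) l *
          ((ρP t l * uP t l - ρM t l * uM t l) - U t l * (ρP t l - ρM t l)) = 0 ∧
      deriv (fun s => It s l) t +
        deriv (fun m => x t m) l *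
          (V t l * (ρP t l * uP t l - ρM t l * uM t l) -
            (ρP t l * uP t l * vP t l - ρM t l * uM t l * vM t l)) +
        deriv (fun m => y t m) l *
          ((ρP t l * uP t l ^ 2 - ρM t l * uM t l ^ 2) -
            U t l * (ρP t l * uP t l - ρM t l * uM t l)) = 0 ∧
      deriv (fun s => Jt s l) t +
        deriv (fun m => x t m) l *
          (V t l * (ρP t l * vP t l - ρM t l * vM t l) -
            (ρP t l * vP t l ^ 2 - ρM t l * vM t l ^ 2)) +
        deriv (fun m => y t m) l *
          ((ρP t l * uP t l * vP t l - ρM t l * uM t l * vM t l) -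
            U t l * (ρP t l * vP t l - ρM t l * vM t l)) = 0 := by
  intro t ht l
  have ht' : t ∈ Set.Icc (0:ℝ) T := ⟨ht.1.le, ht.2⟩
  have sl : ∀ {f : ℝ → ℝ → ℝ}, (ContDiff ℝ 1 fun p : ℝ × ℝ => f p.1 p.2) →
      Continuous fun s => f s l := fun hf =>
    aux_slice hf.continuous continuous_id continuous_const
  have cωP : Continuous fun s => ωP s l := by
    simp_rw [hωP]
    exact ((aux_cont_fst haP l).mul (aux_cont_snd hbP l)).sub
      ((aux_cont_fst hbP l).mul (aux_cont_snd haP l))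
  have cωM : Continuous fun s => ωM s l := by
    simp_rw [hωM]
    exact ((aux_cont_fst haM l).mul (aux_cont_snd hbM l)).sub
      ((aux_cont_fst hbM l).mul (aux_cont_snd haM l))
  have cρP := aux_slice hρ₀ (sl haP) (sl hbP)
  have cρM := aux_slice hρ₀ (sl haM) (sl hbM)
  have cuP : Continuous fun s => uP s l := by
    simp_rw [huP]; exact aux_slice hu0P.continuous (sl haP) (sl hbP)
  have cvP : Continuous fun s => vP s l := by
    simp_rw [hvP]; exact aux_slice hv0P.continuous (sl haP) (sl hbP)
  have cuM : Continuous fun s => uM s l := by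
    simp_rw [huM]; exact aux_slice hu0M.continuous (sl haM) (sl hbM)
  have cvM : Continuous fun s => vM s l := by
    simp_rw [hvM]; exact aux_slice hv0M.continuous (sl haM) (sl hbM)
  have dP := aux_int ((cρP.mul cωP).sub (cρM.mul cωM)) (fun s => hPt s l) t
  have dI := aux_int (((cρP.mul cuP).mul cωP).sub ((cρM.mul cuM).mul cωM)) (fun s => hIt s l) t
  have dJ := aux_int (((cρP.mul cvP).mul cωP).sub ((cρM.mul cvM).mul cωM)) (fun s => hJt s l) t
  have kP := aux_key hu0P hv0P haP hbP hxP hyP ht (hxt t ht l) (hyt t ht l)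
  have kM := aux_key hu0M hv0M haM hbM hxM hyM ht (hxt t ht l) (hyt t ht l)
  rw [← hDP, ← hωP, ← huP, ← hvP] at kP
  rw [← hDM, ← hωM, ← huM, ← hvM] at kM
  have rP : ρ₀ (aP t l) (bP t l) = ρP t l * DP t l := by
    rw [hρP, div_mul_cancel₀ _ (hDPne t ht' l)]
  have rM : ρ₀ (aM t l) (bM t l) = ρM t l * DM t l := by
    rw [hρM, div_mul_cancel₀ _ (hDMne t ht' l)]
  simp only [Pi.sub_apply, Pi.mul_apply] at dP dI dJ
  rw [dP, dI, dJ, rP, rM]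
  refine ⟨?_, ?_, ?_⟩
  · linear_combination ρP t l * kP - ρM t l * kM
  · linear_combination ρP t l * uP t l * kP - ρM t l * uM t l * kM
  · linear_combination ρP t l * vP t l * kP - ρM t l * vM t l * kM
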